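/- Let Γ be a group, let S ⊆ Γ be a finite subset with S = S⁻¹ and 1 ∈ S, let F be a function of hyperbolic type on Γ, and let μ ≥ 0 satisfy F(s) ≤ cosh μ for all s ∈ S. Then for every n ≥ 1 and every γ ∈ Γ that can be written as a product of at most n elements of S, one has F(γ) ≤ cosh(4ⁿ·μ). -/

import Mathlib

/-- A kernel of hyperbolic type on a set `X`: symmetric, nonnegative, with diagonal `1`,
satisfying the hyperbolic Cauchy–Schwarz inequalities. -/
def IsHypKernel {X : Type*} (K : X → X → ℝ) : Prop :=
  (∀ x y, K x y = K y x) ∧ (∀ x y, 0 ≤ K x y) ∧ (∀ x, K x x = 1) ∧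
  ∀ (n : ℕ) (x₀ : X) (x : Fin n → X) (lam : Fin n → ℝ),
    (∑ i, ∑ j, lam i * lam j * K (x i) (x j)) ≤ (∑ k, lam k * K x₀ (x k)) ^ 2

/-- A function of hyperbolic type on a group `Γ`. -/
def IsHypType {Γ : Type*} [Group Γ] (F : Γ → ℝ) : Prop :=
  IsHypKernel (fun α β : Γ => F (α⁻¹ * β))

/-!
The two-point case of the hyperbolic Cauchy–Schwarz inequality says that a certain binary quadratic
form is nonnegative. The sign of its discriminant is the triangle inequality for `arcosh ∘ K`, as in
the hyperboloid model of hyperbolic space. On a group, `ℓ = arcosh ∘ F` is therefore a subadditive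
length function, so a product of at most `n` elements of length at most `μ` has length at most
`n * μ ≤ 4 ^ n * μ`.
-/

open Real

theorem arcosh_le_abs_iff {x μ : ℝ} (hx : 1 ≤ x) : arcosh x ≤ |μ| ↔ x ≤ cosh μ := by
  rw [← abs_of_nonneg (arcosh_nonneg hx), ← cosh_le_cosh, cosh_arcosh hx]

theorem cosh_mul_le_cosh_mul_of_le {a b : ℝ} (ha : 0 ≤ a) (hab : a ≤ b) (μ : ℝ) :
    cosh (a * μ) ≤ cosh (b * μ) := by
  rw [cosh_le_cosh, abs_mul, abs_mul]
  gcongr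

namespace IsHypKernel

variable {X : Type*} {K : X → X → ℝ}

theorem symm (hK : IsHypKernel K) (x y : X) : K x y = K y x :=
  hK.1 x y

theorem nonneg (hK : IsHypKernel K) (x y : X) : 0 ≤ K x y :=
  hK.2.1 x y

theorem apply_self (hK : IsHypKernel K) (x : X) : K x x = 1 :=
  hK.2.2.1 x

theorem two_point_le (hK : IsHypKernel K) (x y z : X) (s t : ℝ) :
    s ^ 2 + 2 * s * t * K x z + t ^ 2 ≤ (s * K x y + t * K y z) ^ 2 := by
  have h := hK.2.2.2 2 y ![x, z] ![s, t]
  simp only [Fin.sum_univ_two, Matrix.cons_val_zero, Matrix.cons_val_one, hK.apply_self,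
    hK.symm y x, hK.symm z x] at h
  linarith

theorem one_le (hK : IsHypKernel K) (x y : X) : 1 ≤ K x y := by
  have h := hK.two_point_le x y y 1 0
  exact (one_le_sq_iff₀ (hK.nonneg x y)).mp (by linarith)

theorem sq_sub_mul_le (hK : IsHypKernel K) (x y z : X) :
    (K x z - K x y * K y z) ^ 2 ≤ (K x y ^ 2 - 1) * (K y z ^ 2 - 1) := by
  have h : discrim (K x y ^ 2 - 1) (2 * (K x y * K y z - K x z)) (K y z ^ 2 - 1) ≤ 0 :=
    discrim_le_zero fun t ↦ by linarith [hK.two_point_le x y z t 1]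
  rw [discrim] at h
  linarith

theorem arcosh_triangle (hK : IsHypKernel K) (x y z : X) :
    arcosh (K x z) ≤ arcosh (K x y) + arcosh (K y z) := by
  have hxy := hK.one_le x y
  have hyz := hK.one_le y z
  have hdev : K x z - K x y * K y z ≤ √(K x y ^ 2 - 1) * √(K y z ^ 2 - 1) := by
    rw [← sqrt_mul (sub_nonneg.mpr (one_le_pow₀ hxy))]
    exact le_sqrt_of_sq_le (hK.sq_sub_mul_le x y z)
  rw [← abs_of_nonneg (add_nonneg (arcosh_nonneg hxy) (arcosh_nonneg hyz)),
    arcosh_le_abs_iff (hK.one_le x z), cosh_add, cosh_arcosh hxy, cosh_arcosh hyz,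
    sinh_arcosh hxy, sinh_arcosh hyz]
  linarith

end IsHypKernel

namespace IsHypType

variable {Γ : Type*} [Group Γ] {F : Γ → ℝ}

theorem apply_one (hF : IsHypType F) : F 1 = 1 := by
  simpa using hF.apply_self 1

theorem one_le (hF : IsHypType F) (γ : Γ) : 1 ≤ F γ := by
  simpa using IsHypKernel.one_le hF 1 γ

theorem arcosh_mul_le (hF : IsHypType F) (g h : Γ) :
    arcosh (F (g * h)) ≤ arcosh (F g) + arcosh (F h) := by
  simpa using hF.arcosh_triangle 1 g (g * h)

theorem arcosh_list_prod_le (hF : IsHypType F) (l : List Γ) :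
    arcosh (F l.prod) ≤ (l.map fun g ↦ arcosh (F g)).sum :=
  l.apply_prod_le_sum_map (fun g ↦ arcosh (F g)) (by rw [hF.apply_one, arcosh_zero])
    hF.arcosh_mul_le

theorem list_prod_le_cosh (hF : IsHypType F) {μ : ℝ} {l : List Γ}
    (hl : ∀ g ∈ l, F g ≤ cosh μ) : F l.prod ≤ cosh (l.length * μ) := by
  rw [← arcosh_le_abs_iff (hF.one_le _)]
  have hlength : ∀ r ∈ l.map fun g ↦ arcosh (F g), r ≤ |μ| :=
    List.forall_mem_map.mpr fun g hg ↦ (arcosh_le_abs_iff (hF.one_le g)).mpr (hl g hg)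
  calc
    arcosh (F l.prod) ≤ (l.map fun g ↦ arcosh (F g)).sum := hF.arcosh_list_prod_le l
    _ ≤ (l.map fun g ↦ arcosh (F g)).length • |μ| := List.sum_le_card_nsmul _ _ hlength
    _ = |l.length * μ| := by rw [List.length_map, nsmul_eq_mul, abs_mul, Nat.abs_cast]

end IsHypType

theorem hypType_growth_bound_general {Γ : Type*} [Group Γ] (S : Set Γ) (F : Γ → ℝ)
    (hF : IsHypType F) (μ : ℝ) (hbound : ∀ s ∈ S, F s ≤ cosh μ) (n : ℕ) (γ : Γ)
    (hγ : ∃ l : List Γ, (∀ x ∈ l, x ∈ S) ∧ l.length ≤ n ∧ l.prod = γ) :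
    F γ ≤ cosh (n * μ) := by
  obtain ⟨l, hlS, hln, rfl⟩ := hγ
  exact (hF.list_prod_le_cosh fun s hs ↦ hbound s (hlS s hs)).trans
    (cosh_mul_le_cosh_mul_of_le (Nat.cast_nonneg _) (Nat.cast_le.mpr hln) μ)

/-- If `F` is of hyperbolic type, `S` is a finite symmetric subset containing `1`, `μ ≥ 0`
and `F(s) ≤ cosh μ` on `S`, then any `γ` which is a product of at most `n ≥ 1` elements of
`S` satisfies `F(γ) ≤ cosh (4^n μ)`. -/
theorem hypType_growth_bound {Γ : Type*} [Group Γ] (S : Finset Γ)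
    (hSsym : ∀ s ∈ S, s⁻¹ ∈ S) (hSone : (1 : Γ) ∈ S)
    (F : Γ → ℝ) (hF : IsHypType F) (μ : ℝ) (hμ : 0 ≤ μ)
    (hbound : ∀ s ∈ S, F s ≤ Real.cosh μ) :
    ∀ n : ℕ, 1 ≤ n → ∀ γ : Γ,
      (∃ l : List Γ, (∀ x ∈ l, x ∈ S) ∧ l.length ≤ n ∧ l.prod = γ) →
      F γ ≤ Real.cosh (4 ^ n * μ) := by
  intro n _ γ hγ
  have hn : (n : ℝ) ≤ 4 ^ n := mod_cast (Nat.lt_pow_self (by norm_num)).le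
  exact (hypType_growth_bound_general S F hF μ hbound n γ hγ).trans
    (cosh_mul_le_cosh_mul_of_le n.cast_nonneg hn μ)
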